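/- For every fixed n ≥ 2, the minimal gap g(n,m) satisfies g(n,m) ∼ c_n m^{1−1/(n−1)} as m → ∞, where c_n = (1/2)(n−1)·n^{1/(n−1)}; that is, g(n,m)/(c_n m^{1−1/(n−1)}) → 1 as m → ∞. -/

import Mathlib

/-!
The lower and the upper bound for `gMin n m` both have leading term
`n.choose 2 * (m / n) ^ (1 - 1 / (n - 1))`, which equals `c_n * m ^ (1 - 1 / (n - 1))`.

**Lower bound** (`lower_bound`). Choose an integer `b` that is not a coordinate of any point of the
weak antichain `A`. Compressing towards `b` in each direction in turn keeps the size, does not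
enlarge the projections, and, because `A` is a weak antichain, leaves every point with at least one
coordinate equal to `b`, called a base coordinate (`exists_compressed`). View the projections as
subsets of the hyperplanes `x i = b` and call their union the shadow. Counting each shadow point by
the projections that contain it shows that `gap A` is at least the number of shadow points with two
or more base coordinates (`card_add_card_le`), hence at least half of `∑ a i j` over ordered pairs
`i ≠ j`, where `a i j` counts the shadow points with base coordinates exactly `i` and `j`. If `P i`
counts the points of `A` whose only base coordinate is `i`, then the projections of these points
along `j` are counted by `a i j`, so the Loomis–Whitney inequality gives
`P i ^ (n - 2) ≤ ∏ j ≠ i, a i j`; moreover `|A| ≤ ∑ P i + gap A`. An entropy argument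
(`star_ineq`), resting on Popoviciu's inequality for the convex function `t log t`, shows that under
these constraints `∑ a i j` is smallest when all `P i` and all `a i j` are equal.

**Upper bound** (`upper_bound`). Let `N` be one more than the least integer whose `(n - 1)`-st power
is at least `m / n`. Then `ANbox n N` has at least `m` points, and it has an `m`-point subset closed
under replacing coordinates by `0`. The gap of such a set is the sum of (number of zero coordinates)
minus `1` over its points, hence at most the corresponding sum over the whole box, which is at most
`n.choose 2 * N ^ (n - 2)` by a Bonferroni inequality.
-/

namespace ProjWA

variable {ι : Type*}

/-- `A ⊆ ℤ^ι` is a weak antichain if it contains no `x, y` with `x i < y i` for every `i`. -/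
def IsWeakAntichain [Fintype ι] (A : Finset (ι → ℤ)) : Prop :=
  ∀ x ∈ A, ∀ y ∈ A, ¬ ∀ i, x i < y i

/-- The projection deleting the coordinate `i`. -/
def projFun [DecidableEq ι] (i : ι) (x : ι → ℤ) : {j : ι // j ≠ i} → ℤ :=
  fun j => x j.1

/-- The image of a finite set under the projection deleting coordinate `i`. -/
def proj [Fintype ι] [DecidableEq ι] (i : ι) (A : Finset (ι → ℤ)) :
    Finset ({j : ι // j ≠ i} → ℤ) :=
  A.image (projFun i)

/-- `gap A = Σ_i |π_i(A)| - |A|`. -/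
def gap [Fintype ι] [DecidableEq ι] (A : Finset (ι → ℤ)) : ℤ :=
  (∑ i : ι, ((proj i A).card : ℤ)) - A.card

/-- `X_n`: the set of points of `ℤ_{≥0}^ι` having at least one coordinate equal to zero. -/
def XSet (ι : Type*) : Set (ι → ℤ) :=
  {x | (∀ i, 0 ≤ x i) ∧ ∃ i, x i = 0}

/-- A down-set in `ℤ_{≥0}^ι`. -/
def IsDownSet (A : Finset (ι → ℤ)) : Prop :=
  ∀ x y : ι → ℤ, (∀ i, 0 ≤ x i) → (∀ i, x i ≤ y i) → y ∈ A → x ∈ A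

/-- The `i`-th bottom layer `B_i(A)`. -/
def bottomLayer [Fintype ι] [DecidableEq ι] (i : ι) (A : Finset (ι → ℤ)) : Finset (ι → ℤ) :=
  A.filter fun x => ∀ y ∈ A, (∀ j, j ≠ i → y j = x j) → x i ≤ y i

/-- The `i`-compression `C_i(A)`: each `x ∈ B_i(A)` is replaced by the point obtained
by setting its `i`-th coordinate to `0`. -/
def compress [Fintype ι] [DecidableEq ι] (i : ι) (A : Finset (ι → ℤ)) : Finset (ι → ℤ) :=
  (A \ bottomLayer i A) ∪ (bottomLayer i A).image fun x => Function.update x i 0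

/-- `layersRest A k = A \ (A_1 ∪ ⋯ ∪ A_k)` where `A_i` are the layers of `A`. -/
def layersRest {n : ℕ} (A : Finset (Fin n → ℤ)) : ℕ → Finset (Fin n → ℤ)
  | 0 => A
  | k + 1 =>
      layersRest A k \ (if h : k < n then bottomLayer ⟨k, h⟩ (layersRest A k) else ∅)

/-- The layers `A_1, …, A_n` of `A`, defined by `A_i = B_i(A \ (A_1 ∪ ⋯ ∪ A_{i-1}))`. -/
def layer {n : ℕ} (A : Finset (Fin n → ℤ)) (i : Fin n) : Finset (Fin n → ℤ) :=
  bottomLayer i (layersRest A i.1)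

/-- `compressUpTo A k = C_k(C_{k-1}(⋯(C_1(A))⋯))`. -/
def compressUpTo {n : ℕ} (A : Finset (Fin n → ℤ)) : ℕ → Finset (Fin n → ℤ)
  | 0 => A
  | k + 1 =>
      if h : k < n then compress ⟨k, h⟩ (compressUpTo A k) else compressUpTo A k

/-- The complete `i`-compression `𝒞_i(A)`: every line in direction `i` is replaced
by an initial segment of the same size. -/
def ccompress [Fintype ι] [DecidableEq ι] (i : ι) (A : Finset (ι → ℤ)) : Finset (ι → ℤ) :=
  A.biUnion fun x =>
    (Finset.range ((A.filter fun y => ∀ j, j ≠ i → y j = x j).card)).image fun a : ℕ =>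
      Function.update x i (a : ℤ)

/-- The set `T = {i : x i ≠ y i}` of coordinates where `x` and `y` differ. -/
def diffSet [Fintype ι] (x y : ι → ℤ) : Finset ι :=
  Finset.univ.filter fun i => x i ≠ y i

/-- The maximum value of `x` on a finite set of coordinates (`⊥` if the set is empty). -/
def maxOn (s : Finset ι) (x : ι → ℤ) : WithBot ℤ :=
  (s.image x).max

/-- The largest coordinate in `s` at which `x` attains its maximum over `s`. -/
def argmaxOn [LinearOrder ι] (s : Finset ι) (x : ι → ℤ) : WithBot ι :=
  (s.filter fun i => (x i : WithBot ℤ) = maxOn s x).max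

/-- The balanced order: with `T = {i : x i ≠ y i}`, `x < y` iff the maximum of `x` on `T` is
smaller than that of `y` on `T`, or they are equal and the largest index where `x` attains
this maximum on `T` is smaller than the corresponding index for `y`. -/
def balancedLT [Fintype ι] [LinearOrder ι] (x y : ι → ℤ) : Prop :=
  x ≠ y ∧
    (maxOn (diffSet x y) x < maxOn (diffSet x y) y ∨
      (maxOn (diffSet x y) x = maxOn (diffSet x y) y ∧
        argmaxOn (diffSet x y) x < argmaxOn (diffSet x y) y))

/-- `I` is an initial segment of the balanced order on `X_ι`. -/
def IsInitSeg [Fintype ι] [LinearOrder ι] (I : Finset (ι → ℤ)) : Prop :=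
  ↑I ⊆ XSet ι ∧ ∀ x ∈ I, ∀ y ∈ XSet ι, balancedLT y x → y ∈ I

/-- `S(A) = {x ∈ ℤ_{>0}^ι : replacing any one coordinate of x by 0 gives an element of A}`. -/
def SSet [DecidableEq ι] (A : Finset (ι → ℤ)) : Set (ι → ℤ) :=
  {x | (∀ k, 0 < x k) ∧ ∀ k, Function.update x k 0 ∈ A}

/-- Insert the value `a` at position `i`. -/
def insertAt [DecidableEq ι] (i : ι) (a : ℤ) (x : {j : ι // j ≠ i} → ℤ) : ι → ℤ :=
  fun j => if h : j = i then a else x ⟨j, h⟩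

/-- `L^i_a(A)`: the elements of `X_{n-1}` which, after inserting the value `a` at
position `i`, give elements of `A`. -/
def Lset [Fintype ι] [DecidableEq ι] (i : ι) (a : ℤ) (A : Finset (ι → ℤ)) :
    Finset ({j : ι // j ≠ i} → ℤ) :=
  (proj i (A.filter fun x => x i = a)).filter fun x' => ∃ j, x' j = 0

/-- `K^i(A)`: the elements of `ℤ_{>0}^{n-1}` which, after inserting a `0` at position `i`,
give elements of `A`. -/
def Kset [Fintype ι] [DecidableEq ι] (i : ι) (A : Finset (ι → ℤ)) :
    Finset ({j : ι // j ≠ i} → ℤ) :=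
  (proj i (A.filter fun x => x i = 0)).filter fun x' => ∀ j, 0 < x' j

/-- `K` is an initial segment of `ℤ_{>0}^{n-1}` with respect to the order `≺` defined by
`x ≺ y` iff inserting a `0` at position `i` into `x` gives a smaller element of `X_n`
(in the balanced order) than inserting a `0` at position `i` into `y`. -/
def IsKInitSeg [Fintype ι] [LinearOrder ι] (i : ι) (K : Finset ({j : ι // j ≠ i} → ℤ)) :
    Prop :=
  (∀ x ∈ K, ∀ j, 0 < x j) ∧
    ∀ x ∈ K, ∀ y : {j : ι // j ≠ i} → ℤ, (∀ j, 0 < y j) →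
      balancedLT (insertAt i 0 y) (insertAt i 0 x) → y ∈ K

/-- `A_N = {x ∈ ℤ^n : 0 ≤ x_j ≤ N-1 for all j, and x_i = 0 for some i}`. -/
def ANbox (n N : ℕ) : Finset (Fin n → ℤ) :=
  (Fintype.piFinset fun _ : Fin n => (Finset.range N).image fun k : ℕ => (k : ℤ)).filter
    fun x => ∃ i, x i = 0

/-- `g(n,m)`: the minimum of `gap A` over weak antichains `A` of size `m` in `ℤ^n`. -/
noncomputable def gMin (n m : ℕ) : ℝ :=
  sInf {r : ℝ | ∃ A : Finset (Fin n → ℤ), IsWeakAntichain A ∧ A.card = m ∧ (gap A : ℝ) = r}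

/-! ### Popoviciu's inequality -/

/-- The weighted three-point Popoviciu inequality when `x` and `y` lie on the same side of the
weighted mean `M`. The mean of `x, y` is handled by Jensen directly; the mixed means of `y, z` and
of `x, z` lie between `M` and `z`, and Jensen on that segment gives the other two terms. -/
theorem popoviciu_three_aux {f : ℝ → ℝ} (hf : ConvexOn ℝ (Set.Ici 0) f) {p q r x y z M : ℝ}
    (hp : 0 < p) (hq : 0 < q) (hr : 0 < r) (hx : 0 ≤ x) (hy : 0 ≤ y) (hz : 0 ≤ z)
    (hM : p * x + q * y + r * z = (p + q + r) * M) (hxy : 0 ≤ (x - M) * (y - M)) :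
    (p + q) * f ((p * x + q * y) / (p + q)) + (q + r) * f ((q * y + r * z) / (q + r))
      + (p + r) * f ((p * x + r * z) / (p + r))
      ≤ p * f x + q * f y + r * f z + (p + q + r) * f M := by
  have h0 : p * (x - M) + q * (y - M) + r * (z - M) = 0 := by linarith
  have hM0 : 0 ≤ M := by
    by_contra h
    have : 0 < p * x + q * y + r * z - (p + q + r) * M := by
      have : (p + q + r) * M < 0 := mul_neg_of_pos_of_neg (by positivity) (by linarith)
      have : 0 ≤ p * x + q * y + r * z := by positivity
      linarith
    linarith
  -- Jensen with weights `a, c`, cleared of denominators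
  have jensen : ∀ {a c u v t : ℝ}, 0 ≤ a → 0 ≤ c → 0 < a + c → 0 ≤ u → 0 ≤ v →
      t = (a * u + c * v) / (a + c) → (a + c) * f t ≤ a * f u + c * f v := by
    intro a c u v t ha hc hac hu hv ht
    have := hf.2 (Set.mem_Ici.2 hu) (Set.mem_Ici.2 hv) (show 0 ≤ a / (a + c) by positivity)
      (show 0 ≤ c / (a + c) by positivity) (by field_simp)
    simp only [smul_eq_mul] at this
    have e : a / (a + c) * u + c / (a + c) * v = t := by rw [ht]; field_simp
    rw [e] at this
    calc (a + c) * f t ≤ (a + c) * (a / (a + c) * f u + c / (a + c) * f v) := by gcongr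
      _ = _ := by field_simp
  have h1 := jensen hp.le hq.le (by positivity) hx hy rfl
  by_cases hzM : z = M
  · -- then all three points coincide with the mean
    have h2 : p * (x - M) + q * (y - M) = 0 := by rw [hzM] at h0; linarith
    have h3 : x - M = 0 := by
      have : p * (x - M) ^ 2 = - (q * ((x - M) * (y - M))) := by
        linear_combination (x - M) * h2
      have h4 : p * (x - M) ^ 2 ≤ 0 := by
        rw [this]; have := mul_nonneg hq.le hxy; linarith
      have : (x - M) ^ 2 ≤ 0 := by
        by_contra h
        push Not at h
        have := mul_pos hp h
        linarith
      exact pow_eq_zero_iff (two_ne_zero) |>.1 (le_antisymm this (sq_nonneg _))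
    have h4 : y - M = 0 := by
      rw [h3] at h2; have : q * (y - M) = 0 := by linarith
      rcases mul_eq_zero.1 this with h | h
      · linarith
      · exact h
    have hx' : x = M := by linarith
    have hy' : y = M := by linarith
    subst hzM
    rw [hx', hy']
    have e1 : (p * z + q * z) / (p + q) = z := by field_simp
    have e2 : (q * z + r * z) / (q + r) = z := by field_simp
    have e3 : (p * z + r * z) / (p + r) = z := by field_simp
    rw [e1, e2, e3]; linarith
  · have hd : z - M ≠ 0 := sub_ne_zero.2 hzM
    -- `A`, `B` are the masses put on `z` when the two mixed means are spread over `M` and `z`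
    obtain ⟨A, hA⟩ : ∃ A, A = -(q * (y - M)) / (z - M) := ⟨_, rfl⟩
    obtain ⟨B, hB⟩ : ∃ B, B = -(p * (x - M)) / (z - M) := ⟨_, rfl⟩
    have hA' : A * (z - M) = -(q * (y - M)) := by rw [hA]; field_simp
    have hB' : B * (z - M) = -(p * (x - M)) := by rw [hB]; field_simp
    have hAB : A + B = r := by
      have : (A + B - r) * (z - M) = 0 := by linear_combination hA' + hB' - h0
      rcases mul_eq_zero.1 this with h | h
      · linarith
      · exact absurd h hd
    have hABn : 0 ≤ A * B := by
      have : (A * B) * (z - M) ^ 2 = p * q * ((x - M) * (y - M)) := by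
        linear_combination (B * (z - M)) * hA' - (q * (y - M)) * hB'
      have h2 : 0 ≤ (A * B) * (z - M) ^ 2 := by rw [this]; positivity
      have h3 : 0 < (z - M) ^ 2 := by positivity
      exact nonneg_of_mul_nonneg_left h2 h3
    have hA0 : 0 ≤ A := by
      by_contra h
      have : B > 0 := by linarith
      nlinarith
    have hB0 : 0 ≤ B := by
      by_contra h
      have : A > 0 := by linarith
      nlinarith
    have h2 := jensen (a := q + r - B) (c := B) (u := M) (v := z)
      (t := (q * y + r * z) / (q + r)) (by linarith) hB0 (by linarith) hM0 hz (by
        rw [show q + r - B + B = q + r by ring]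
        congr 1
        linear_combination h0 - hB')
    have h3 := jensen (a := p + r - A) (c := A) (u := M) (v := z)
      (t := (p * x + r * z) / (p + r)) (by linarith) hA0 (by linarith) hM0 hz (by
        rw [show p + r - A + A = p + r by ring]
        congr 1
        linear_combination h0 - hA')
    rw [show q + r - B + B = q + r by ring] at h2
    rw [show p + r - A + A = p + r by ring] at h3
    have hB2 : B = r - A := by linarith
    subst hB2
    linarith

/-- The weighted three-point Popoviciu inequality: among three points, two always lie on the same
side of their mean. -/
theorem popoviciu_three {f : ℝ → ℝ} (hf : ConvexOn ℝ (Set.Ici 0) f) {p q r x y z : ℝ}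
    (hp : 0 < p) (hq : 0 < q) (hr : 0 < r) (hx : 0 ≤ x) (hy : 0 ≤ y) (hz : 0 ≤ z) :
    (p + q) * f ((p * x + q * y) / (p + q)) + (q + r) * f ((q * y + r * z) / (q + r))
      + (p + r) * f ((p * x + r * z) / (p + r))
      ≤ p * f x + q * f y + r * f z
        + (p + q + r) * f ((p * x + q * y + r * z) / (p + q + r)) := by
  obtain ⟨M, hM⟩ : ∃ M, M = (p * x + q * y + r * z) / (p + q + r) := ⟨_, rfl⟩
  rw [← hM]
  have hM : p * x + q * y + r * z = (p + q + r) * M := by rw [hM]; field_simp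
  rcases le_or_gt 0 ((x - M) * (y - M)) with h | h
  · exact popoviciu_three_aux hf hp hq hr hx hy hz hM h
  rcases le_or_gt 0 ((y - M) * (z - M)) with h' | h'
  · have := popoviciu_three_aux hf hq hr hp hy hz hx (M := M) (by linarith) h'
    rw [add_comm r p, add_comm (r * z) (p * x), add_comm q p, add_comm (q * y) (p * x)] at this
    rw [show p + q + r = q + r + p by ring]
    linarith
  have h'' : 0 ≤ (z - M) * (x - M) := by
    have h1 : 0 < ((x - M) * (y - M)) * ((y - M) * (z - M)) := mul_pos_of_neg_of_neg h h'
    have h2 : ((x - M) * (y - M)) * ((y - M) * (z - M)) = (y - M) ^ 2 * ((z - M) * (x - M)) := by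
      ring
    rw [h2] at h1
    exact (pos_of_mul_pos_right h1 (sq_nonneg _)).le
  have := popoviciu_three_aux hf hr hp hq hz hx hy (M := M) (by linarith) h''
  rw [add_comm r p, add_comm (r * z) (p * x), add_comm r q, add_comm (r * z) (q * y)] at this
  rw [show p + q + r = r + p + q by ring]
  linarith

/-- What adding the point `x l` to `s` contributes to Popoviciu's inequality. Points of `s` are
merged one at a time into their mean, using the three-point inequality with weights
`(|s|, 1, 1)` at the mean of `s`, the next point and `x l`. -/
theorem popoviciu_step {ι : Type*} [DecidableEq ι] {f : ℝ → ℝ} (hf : ConvexOn ℝ (Set.Ici 0) f)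
    {x : ι → ℝ} (hx : ∀ i, 0 ≤ x i) (l : ι) (s : Finset ι) (hl : l ∉ s) :
    (s.card : ℝ) * f ((∑ i ∈ s, x i) / s.card) + f (x l)
      + ∑ i ∈ s, (2 * f ((x i + x l) / 2) - f (x i) - f (x l))
      ≤ ((s.card : ℝ) + 1) * f ((∑ i ∈ s, x i + x l) / ((s.card : ℝ) + 1)) := by
  induction s using Finset.cons_induction with
  | empty => simp
  | cons i s hi ih =>
    have hls : l ∉ s := fun h => hl (by simp [h])
    specialize ih hls
    rw [Finset.sum_cons, Finset.sum_cons, Finset.card_cons]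
    push_cast
    rcases s.eq_empty_or_nonempty with rfl | hs
    · simp
      norm_num
    have hp : (0 : ℝ) < s.card := by exact_mod_cast hs.card_pos
    have key := popoviciu_three hf hp one_pos one_pos
      (div_nonneg (Finset.sum_nonneg fun i _ => hx i) hp.le : 0 ≤ (∑ i ∈ s, x i) / s.card)
      (hx i) (hx l)
    have e : (s.card : ℝ) * ((∑ i ∈ s, x i) / s.card) = ∑ i ∈ s, x i := by field_simp
    rw [e] at key
    simp only [one_mul] at key
    rw [show (1 : ℝ) + 1 = 2 by norm_num] at key
    rw [add_comm (x i) (∑ i ∈ s, x i)]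
    linarith

/-- Popoviciu's inequality comparing the values of a convex function at points, at the midpoints
of pairs and at the mean. The double sum is over ordered pairs. -/
theorem popoviciu {ι : Type*} [DecidableEq ι] {f : ℝ → ℝ} (hf : ConvexOn ℝ (Set.Ici 0) f)
    {x : ι → ℝ} (hx : ∀ i, 0 ≤ x i) (s : Finset ι) :
    ∑ i ∈ s, ∑ j ∈ s.erase i, f ((x i + x j) / 2)
      ≤ ((s.card : ℝ) - 2) * ∑ i ∈ s, f (x i) + s.card * f ((∑ i ∈ s, x i) / s.card) := by
  induction s using Finset.cons_induction with
  | empty => simp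
  | cons l s hl ih =>
    have step := popoviciu_step hf hx l s hl
    rw [Finset.sum_cons, Finset.sum_cons, Finset.sum_cons, Finset.card_cons]
    have h1 : (Finset.cons l s hl).erase l = s := by simp [hl]
    have h2 : ∀ i ∈ s, ∑ j ∈ (Finset.cons l s hl).erase i, f ((x i + x j) / 2)
        = f ((x i + x l) / 2) + ∑ j ∈ s.erase i, f ((x i + x j) / 2) := by
      intro i hi
      have : (Finset.cons l s hl).erase i = Finset.cons l (s.erase i) (by simp [hl]) := by
        ext j
        have : i ≠ l := fun h => hl (h ▸ hi)
        simp only [Finset.mem_erase, Finset.mem_cons]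
        grind
      rw [this, Finset.sum_cons]
    rw [h1, Finset.sum_congr rfl h2, Finset.sum_add_distrib]
    have h3 : ∑ j ∈ s, f ((x l + x j) / 2) = ∑ j ∈ s, f ((x j + x l) / 2) :=
      Finset.sum_congr rfl fun j _ => by rw [add_comm]
    rw [h3]
    rw [Finset.sum_sub_distrib, Finset.sum_sub_distrib, ← Finset.mul_sum, Finset.sum_const,
      nsmul_eq_mul] at step
    push_cast
    rw [add_comm (x l)]
    linarith

/-! ### Products over stars of edge weights -/

/-- One summand of Gibbs' inequality `∑ y log (a / (y T)) ≤ ∑ (a / T - y)`, in a form valid for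
`y = 0`. -/
theorem gibbs_pointwise {y a T : ℝ} (hy : 0 ≤ y) (ha : 0 ≤ a) (hya : 0 < y → 0 < a)
    (hT : 0 < T) :
    y * Real.log a ≤ y * Real.log y + y * Real.log T + a / T - y := by
  rcases hy.eq_or_lt with rfl | hy
  · simp; positivity
  have ha := hya hy
  have h := Real.log_le_sub_one_of_pos (show 0 < a / (y * T) by positivity)
  rw [Real.log_div ha.ne' (by positivity), Real.log_mul hy.ne' hT.ne'] at h
  have h2 := mul_le_mul_of_nonneg_left h hy.le
  have e : y * (a / (y * T) - 1) = a / T - y := by field_simp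
  rw [e] at h2
  linarith

/-- Let `a` be symmetric nonnegative weights on the edges of the complete graph on `n` vertices.
If the product of the weights at each vertex `i` with `P i > 0` is at least `P i ^ (n - 2)`, then
the total weight (counted over ordered pairs) is at least its value in the balanced case, where
all `P i` equal `S / n` and all `a i j` equal `(S / n) ^ ((n - 2) / (n - 1))`.

Normalise `x i = P i / (S / n)`. Gibbs' inequality for the edge distribution proportional to
`(x i + x j) / 2` bounds the total weight below through
`∑ x i ∑ log (a i j)`, up to an entropy term `∑ y log y` over the midpoints `y = (x i + x j) / 2`.
Popoviciu's inequality for `t log t` bounds that term by `(n - 2) ∑ x i log (x i)`, exactly what the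
hypothesis on the stars supplies. -/
theorem star_ineq {n : ℕ} (hn : 2 ≤ n) (a : Fin n → Fin n → ℝ) (P : Fin n → ℝ)
    (ha : ∀ i j, 0 ≤ a i j) (hsymm : ∀ i j, a i j = a j i) (hP : ∀ i, 0 ≤ P i)
    (hPa : ∀ i, 0 < P i → P i ^ (n - 2) ≤ ∏ j ∈ Finset.univ.erase i, a i j)
    (hS : 0 < ∑ i, P i) :
    (n : ℝ) * (n - 1) * ((∑ i, P i) / n) ^ ((1 : ℝ) - 1 / ((n : ℝ) - 1))
      ≤ ∑ i, ∑ j ∈ Finset.univ.erase i, a i j := by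
  have hn2 : (2 : ℝ) ≤ n := by exact_mod_cast hn
  have hn0 : (0 : ℝ) < n := by linarith
  have hn1 : (0 : ℝ) < (n : ℝ) - 1 := by linarith
  set S := ∑ i, P i with hSdef
  obtain ⟨x, hx⟩ : ∃ x : Fin n → ℝ, x = fun i => P i / (S / n) := ⟨_, rfl⟩
  have hx0 : ∀ i, 0 ≤ x i := fun i => by rw [hx]; have := hP i; positivity
  have hxpos : ∀ i, 0 < x i → 0 < P i := fun i h => by
    rcases (hP i).eq_or_lt with h' | h'
    · rw [hx] at h; simp [← h'] at h
    · exact h'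
  have hxsum : ∑ i, x i = n := by
    rw [hx]; simp only; rw [← Finset.sum_div, ← hSdef]; field_simp
  have hapos : ∀ i j, j ≠ i → 0 < x i → 0 < a i j := fun i j hij h => by
    have h1 := hPa i (hxpos i h)
    have h2 : 0 < ∏ j ∈ Finset.univ.erase i, a i j :=
      lt_of_lt_of_le (pow_pos (hxpos i h) _) h1
    have h3 := Finset.prod_ne_zero_iff.1 h2.ne' j (by simp [hij])
    exact lt_of_le_of_ne (ha i j) h3.symm
  have hcard : ∀ i : Fin n, ((Finset.univ.erase i).card : ℝ) = n - 1 := fun i => by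
    rw [Finset.card_erase_of_mem (Finset.mem_univ _), Finset.card_univ, Fintype.card_fin]
    push_cast [show 1 ≤ n by omega]; ring
  have hswap : ∀ F : Fin n → Fin n → ℝ, ∑ i, ∑ j ∈ Finset.univ.erase i, F i j
      = ∑ i, ∑ j ∈ Finset.univ.erase i, F j i := fun F =>
    Finset.sum_comm' (by intro x y; simp [eq_comm])
  -- averaging over ordered pairs gives back the sum over vertices
  have havg : ∀ F : Fin n → Fin n → ℝ, (∀ i j, F i j = F j i) →
      ∑ i, ∑ j ∈ Finset.univ.erase i, (x i + x j) / 2 * F i j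
        = ∑ i, x i * ∑ j ∈ Finset.univ.erase i, F i j := by
    intro F hF
    have h1 : ∑ i, ∑ j ∈ Finset.univ.erase i, x j / 2 * F i j
        = ∑ i, ∑ j ∈ Finset.univ.erase i, x i / 2 * F i j := by
      rw [hswap]
      simp_rw [hF]
    simp_rw [add_div, add_mul, Finset.sum_add_distrib, h1, ← Finset.sum_add_distrib,
      Finset.mul_sum]
    refine Finset.sum_congr rfl fun i _ => ?_
    refine Finset.sum_congr rfl fun j _ => by ring
  set W := ∑ i, ∑ j ∈ Finset.univ.erase i, a i j with hWdef
  have hWpos : 0 < W := by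
    obtain ⟨i, _, hi⟩ : ∃ i ∈ Finset.univ, 0 < x i := by
      by_contra! h
      have := Finset.sum_nonpos h
      rw [hxsum] at this; linarith
    have : Nontrivial (Fin n) := Fin.nontrivial_iff_two_le.2 hn
    obtain ⟨j, hj⟩ := exists_ne i
    refine Finset.sum_pos' (fun i _ => Finset.sum_nonneg fun j _ => ha i j)
      ⟨i, Finset.mem_univ _, ?_⟩
    exact Finset.sum_pos' (fun j _ => ha i j) ⟨j, by simp [hj], hapos i j hj hi⟩
  -- the mean edge weight
  obtain ⟨T, hT⟩ : ∃ T, T = W / (n * (n - 1)) := ⟨_, rfl⟩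
  have hTpos : 0 < T := by rw [hT]; positivity
  have hya : ∀ i j, j ≠ i → 0 < (x i + x j) / 2 → 0 < a i j := fun i j hij h => by
    rcases (hx0 i).eq_or_lt with h' | h'
    · have : 0 < x j := by linarith
      rw [hsymm]; exact hapos j i hij.symm this
    · exact hapos i j hij h'
  have hone : ∑ i, ∑ j ∈ Finset.univ.erase i, (x i + x j) / 2 = n * (n - 1) := by
    have := havg (fun _ _ => 1) (fun _ _ => rfl)
    simp only [mul_one, Finset.sum_const, nsmul_eq_mul, hcard] at this
    rw [this, ← Finset.sum_mul, hxsum]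
  have hgibbs : ∑ i, ∑ j ∈ Finset.univ.erase i, (x i + x j) / 2 * Real.log (a i j)
      ≤ ∑ i, ∑ j ∈ Finset.univ.erase i, ((x i + x j) / 2 * Real.log ((x i + x j) / 2)
        + (x i + x j) / 2 * Real.log T + a i j / T - (x i + x j) / 2) := by
    refine Finset.sum_le_sum fun i _ => Finset.sum_le_sum fun j hj => ?_
    exact gibbs_pointwise (by have := hx0 i; have := hx0 j; positivity) (ha i j)
      (hya i j (Finset.ne_of_mem_erase hj)) hTpos
  simp_rw [Finset.sum_sub_distrib, Finset.sum_add_distrib, ← Finset.sum_mul, ← Finset.sum_div]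
    at hgibbs
  simp_rw [← Finset.sum_div] at hone
  rw [havg _ (fun i j => by rw [hsymm]), hone, ← hWdef] at hgibbs
  have hWT : W / T = n * (n - 1) := by rw [hT]; field_simp
  rw [hWT] at hgibbs
  have hpop := popoviciu Real.convexOn_mul_log hx0 Finset.univ
  rw [hxsum, Finset.card_univ, Fintype.card_fin, div_self hn0.ne', Real.log_one] at hpop
  -- the logarithmic form of the hypothesis `hPa`, weighted by `x i`
  have hlog : ∀ i, ((n : ℝ) - 2) * (x i * Real.log (x i)) + x i * (((n : ℝ) - 2) * Real.log (S / n))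
      ≤ x i * ∑ j ∈ Finset.univ.erase i, Real.log (a i j) := by
    intro i
    rcases (hx0 i).eq_or_lt with h | h
    · simp [← h]
    have hPi := hxpos i h
    have h1 := Real.log_le_log (by positivity) (hPa i hPi)
    rw [Real.log_pow, Real.log_prod (fun j hj => (hapos i j (Finset.ne_of_mem_erase hj) h).ne')]
      at h1
    have h2 : P i = x i * (S / n) := by rw [hx]; field_simp
    rw [h2, Real.log_mul h.ne' (by positivity), Nat.cast_sub hn] at h1
    push_cast at h1
    have := mul_le_mul_of_nonneg_left h1 h.le
    linarith
  have hlog' := Finset.sum_le_sum fun i (_ : i ∈ Finset.univ) => hlog i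
  rw [Finset.sum_add_distrib, ← Finset.mul_sum, ← Finset.sum_mul, hxsum] at hlog'
  have hfin : (n : ℝ) * (((n : ℝ) - 2) * Real.log (S / n)) ≤ n * (n - 1) * Real.log T := by
    linarith
  have hθ : ((1 : ℝ) - 1 / ((n : ℝ) - 1)) * Real.log (S / n) ≤ Real.log T := by
    have e : (1 : ℝ) - 1 / ((n : ℝ) - 1) = (n - 2) / (n - 1) := by field_simp; ring
    rw [e, div_mul_eq_mul_div, div_le_iff₀ hn1]
    refine le_of_mul_le_mul_left (a := (n : ℝ)) ?_ hn0
    linarith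
  have hexp : (S / n) ^ ((1 : ℝ) - 1 / ((n : ℝ) - 1)) ≤ T := by
    rw [← Real.log_le_log_iff (by positivity) hTpos, Real.log_rpow (by positivity)]
    exact hθ
  rw [hT, le_div_iff₀ (by positivity)] at hexp
  linarith

/-! ### Compression to a base value -/

section Combinatorics

variable [Fintype ι] [DecidableEq ι]

/-- The projection along coordinate `i`, realised inside `ι → ℤ` by overwriting the `i`-th
coordinate with a base value `b`; all projections thereby live in the same space. -/
def flat (b : ℤ) (i : ι) (A : Finset (ι → ℤ)) : Finset (ι → ℤ) :=
  A.image fun x => Function.update x i b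

/-- The set of coordinates of `x` equal to the base value `b`. -/
def zeros (b : ℤ) (x : ι → ℤ) : Finset ι := Finset.univ.filter fun i => x i = b

/-- The `i`-compression towards the base value `b`: the bottom point of every line in direction
`i` has its `i`-th coordinate replaced by `b`. A general `b` allows one that does not occur as a
coordinate of the set to be compressed. -/
def compressTo (b : ℤ) (i : ι) (A : Finset (ι → ℤ)) : Finset (ι → ℤ) :=
  (A \ bottomLayer i A) ∪ (bottomLayer i A).image fun x => Function.update x i b

theorem card_proj (b : ℤ) (i : ι) (A : Finset (ι → ℤ)) : (proj i A).card = (flat b i A).card := by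
  have : proj i A = (flat b i A).image (projFun i) := by
    rw [proj, flat, Finset.image_image]
    refine Finset.image_congr fun x _ => ?_
    funext j
    simp [projFun, j.2]
  rw [this, Finset.card_image_of_injOn]
  intro x hx y hy hxy
  simp only [flat, Finset.coe_image, Set.mem_image] at hx hy
  obtain ⟨x, _, rfl⟩ := hx
  obtain ⟨y, _, rfl⟩ := hy
  funext j
  by_cases hj : j = i
  · subst hj; simp
  · exact congrFun hxy ⟨j, hj⟩

theorem mem_bottomLayer {i : ι} {A : Finset (ι → ℤ)} {x : ι → ℤ} :
    x ∈ bottomLayer i A ↔ x ∈ A ∧ ∀ y ∈ A, (∀ j, j ≠ i → y j = x j) → x i ≤ y i := by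
  simp [bottomLayer]

/-- Every line in direction `i` meeting `A` contains a bottom point. -/
theorem exists_bottom {i : ι} {A : Finset (ι → ℤ)} {x : ι → ℤ} (hx : x ∈ A) :
    ∃ z ∈ bottomLayer i A, ∀ j, j ≠ i → z j = x j := by
  obtain ⟨z, hz, hmin⟩ := Finset.exists_min_image (A.filter fun y => ∀ j, j ≠ i → y j = x j)
    (fun y => y i) ⟨x, by simp [hx]⟩
  simp only [Finset.mem_filter] at hz hmin
  refine ⟨z, mem_bottomLayer.2 ⟨hz.1, fun y hy h => hmin y ⟨hy, fun j hj => ?_⟩⟩, hz.2⟩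
  rw [h j hj, hz.2 j hj]

/-- Since no point has `i`-th coordinate `b`, moving one point of each line to height `b` is
injective. -/
theorem card_compressTo {b : ℤ} {i : ι} {A : Finset (ι → ℤ)} (hA : ∀ x ∈ A, x i ≠ b) :
    (compressTo b i A).card = A.card := by
  have hsub : bottomLayer i A ⊆ A := Finset.filter_subset _ _
  rw [compressTo, Finset.card_union_of_disjoint, Finset.card_image_of_injOn,
    Finset.card_sdiff_add_card_eq_card hsub]
  · intro x hx y hy hxy
    have hx := mem_bottomLayer.1 hx
    have hy := mem_bottomLayer.1 hy
    have h : ∀ j, j ≠ i → x j = y j := fun j hj => by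
      have := congrFun hxy j
      simpa [hj] using this
    funext j
    by_cases hj : j = i
    · subst hj
      exact le_antisymm (hx.2 y hy.1 fun j hj => (h j hj).symm) (hy.2 x hx.1 h)
    · exact h j hj
  · rw [Finset.disjoint_left]
    intro x hx hx'
    obtain ⟨y, _, rfl⟩ := Finset.mem_image.1 hx'
    exact hA _ (Finset.mem_sdiff.1 hx).1 (by simp)

/-- Compression does not enlarge any projection: a projection of the compressed set lies in the
compression of the projected set, which is as large as the projection itself. -/
theorem card_flat_compressTo {b : ℤ} {i : ι} {A : Finset (ι → ℤ)} (hA : ∀ x ∈ A, x i ≠ b)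
    (j : ι) : (flat b j (compressTo b i A)).card ≤ (flat b j A).card := by
  by_cases hji : j = i
  · subst hji
    refine Finset.card_le_card fun y hy => ?_
    obtain ⟨x, hx, rfl⟩ := Finset.mem_image.1 hy
    rcases Finset.mem_union.1 hx with h | h
    · exact Finset.mem_image_of_mem _ (Finset.mem_sdiff.1 h).1
    · obtain ⟨z, hz, rfl⟩ := Finset.mem_image.1 h
      simp only [Function.update_idem]
      exact Finset.mem_image_of_mem _ (mem_bottomLayer.1 hz).1
  -- otherwise the projection of the compression lies in the compression of the projection
  have hij : i ≠ j := Ne.symm hji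
  have hb : ∀ x ∈ flat b j A, x i ≠ b := by
    intro x hx
    obtain ⟨y, hy, rfl⟩ := Finset.mem_image.1 hx
    simpa [hij] using hA y hy
  rw [← card_compressTo hb]
  refine Finset.card_le_card fun y hy => ?_
  obtain ⟨x, hx, rfl⟩ := Finset.mem_image.1 hy
  rcases Finset.mem_union.1 hx with h | h
  · obtain ⟨hxA, hxB⟩ := Finset.mem_sdiff.1 h
    refine Finset.mem_union_left _ (Finset.mem_sdiff.2 ⟨Finset.mem_image_of_mem _ hxA, fun hB => ?_⟩)
    refine hxB (mem_bottomLayer.2 ⟨hxA, fun z hz hzx => ?_⟩)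
    have := (mem_bottomLayer.1 hB).2 _ (Finset.mem_image_of_mem _ hz) (fun k hk => ?_)
    · simpa [hij] using this
    · by_cases hkj : k = j
      · subst hkj; simp
      · simp [hkj, hzx k hk]
  · obtain ⟨z, hz, rfl⟩ := Finset.mem_image.1 h
    obtain ⟨w, hw, hwz⟩ := exists_bottom (i := i) (A := flat b j A)
      (Finset.mem_image_of_mem (fun x => Function.update x j b) (mem_bottomLayer.1 hz).1)
    refine Finset.mem_union_right _ (Finset.mem_image.2 ⟨w, hw, ?_⟩)
    funext k
    by_cases hki : k = i
    · subst hki; simp [hij]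
    · rw [Function.update_of_ne hki, hwz k hki]
      by_cases hkj : k = j
      · subst hkj; simp
      · simp [hki, hkj]

/-- Compressing a weak antichain once in every direction gives a set of the same size, with no
larger projections, all of whose points have a coordinate equal to `b`. A point that survives all
compressions unmoved would lie strictly above, in every coordinate, a point of the antichain. -/
theorem exists_compressed {A : Finset (ι → ℤ)} (hA : IsWeakAntichain A) {b : ℤ}
    (hb : ∀ x ∈ A, ∀ i, x i ≠ b) :
    ∃ A' : Finset (ι → ℤ), A'.card = A.card ∧ (∀ i, (flat b i A').card ≤ (flat b i A).card) ∧
      ∀ x ∈ A', ∃ i, x i = b := by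
  -- After compressing in the directions in `s`, a point without base coordinates is an original
  -- point of `A`, and it dominates a point of `A` strictly on `s`, with equality off `s`.
  have main : ∀ s : Finset ι, ∃ A' : Finset (ι → ℤ), A'.card = A.card ∧
      (∀ i, (flat b i A').card ≤ (flat b i A).card) ∧ (∀ x ∈ A', ∀ i ∉ s, x i ≠ b) ∧
      ∀ x ∈ A', (∀ i, x i ≠ b) → x ∈ A ∧ ∃ y ∈ A, (∀ i ∈ s, y i < x i) ∧ ∀ i ∉ s, y i = x i := by
    intro s
    induction s using Finset.cons_induction with
    | empty => exact ⟨A, rfl, fun _ => le_rfl, fun x hx i _ => hb x hx i,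
        fun x hx _ => ⟨hx, x, hx, by simp, by simp⟩⟩
    | cons l s hl ih =>
      obtain ⟨A', h1, h2, h3, h4⟩ := ih
      have hl' : ∀ x ∈ A', x l ≠ b := fun x hx => h3 x hx l hl
      refine ⟨compressTo b l A', (card_compressTo hl').trans h1,
        fun i => (card_flat_compressTo hl' i).trans (h2 i), ?_, ?_⟩
      · intro x hx i hi
        have hil : i ≠ l := fun h => hi (by simp [h])
        have his : i ∉ s := fun h => hi (by simp [h])
        rcases Finset.mem_union.1 hx with h | h
        · exact h3 x (Finset.mem_sdiff.1 h).1 i his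
        · obtain ⟨z, hz, rfl⟩ := Finset.mem_image.1 h
          rw [Function.update_of_ne hil]
          exact h3 z (mem_bottomLayer.1 hz).1 i his
      · intro x hx hxb
        rcases Finset.mem_union.1 hx with h | h
        · obtain ⟨hxA, hxB⟩ := Finset.mem_sdiff.1 h
          refine ⟨(h4 x hxA hxb).1, ?_⟩
          obtain ⟨y, hy, hyx, hlt⟩ : ∃ y ∈ A', (∀ j, j ≠ l → y j = x j) ∧ y l < x l := by
            by_contra! hcon
            exact hxB (mem_bottomLayer.2 ⟨hxA, hcon⟩)
          obtain ⟨-, z, hz, hz1, hz2⟩ := h4 y hy fun i => by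
            by_cases hi : i = l
            · subst hi; exact hl' y hy
            · rw [hyx i hi]; exact hxb i
          refine ⟨z, hz, fun i hi => ?_, fun i hi => ?_⟩
          · rcases Finset.mem_cons.1 hi with rfl | his
            · rw [hz2 i hl]; exact hlt
            · rw [← hyx i (fun h => hl (h ▸ his))]; exact hz1 i his
          · rw [hz2 i (fun h => hi (by simp [h])), hyx i (fun h => hi (by simp [h]))]
        · obtain ⟨z, hz, rfl⟩ := Finset.mem_image.1 h
          exact absurd (by simp) (hxb l)
  obtain ⟨A', h1, h2, -, h4⟩ := main Finset.univ
  refine ⟨A', h1, h2, fun x hx => ?_⟩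
  by_contra! hcon
  obtain ⟨hxA, y, hy, hlt, -⟩ := h4 x hx hcon
  exact hA y hy x hxA fun i => hlt i (Finset.mem_univ i)

/-! ### Counting in the shadow -/

/-- The union of all the projections of `A`, placed in the coordinate hyperplanes at height `b`. -/
def shadow (b : ℤ) (A : Finset (ι → ℤ)) : Finset (ι → ℤ) :=
  Finset.univ.biUnion fun i => flat b i A

theorem flat_eq_self {b : ℤ} {i : ι} {A : Finset (ι → ℤ)} {y : ι → ℤ} (hy : y ∈ A)
    (hi : i ∈ zeros b y) : y ∈ flat b i A := by
  refine Finset.mem_image.2 ⟨y, hy, ?_⟩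
  have : y i = b := (Finset.mem_filter.1 hi).2
  rw [← this, Function.update_eq_self]

/-- The gap is at least the number of shadow points with two or more base coordinates. A point of
the shadow lies in some projection, and a point of `A` lies in the projections along all of its base
coordinates; so in `∑ i, |π_i A|` each point is counted often enough. -/
theorem card_add_card_le {b : ℤ} {A : Finset (ι → ℤ)} (hA : ∀ x ∈ A, ∃ i, x i = b) :
    A.card + ((shadow b A).filter fun y => 2 ≤ (zeros b y).card).card
      ≤ ∑ i, (flat b i A).card := by
  have hsub : A ⊆ shadow b A := fun y hy => by
    obtain ⟨i, hi⟩ := hA y hy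
    exact Finset.mem_biUnion.2 ⟨i, Finset.mem_univ _, flat_eq_self hy (by simp [zeros, hi])⟩
  have h1 : ∑ i, (flat b i A).card
      = ∑ y ∈ shadow b A, (Finset.univ.filter fun i => y ∈ flat b i A).card := by
    simp_rw [Finset.card_eq_sum_ones, Finset.sum_filter]
    rw [Finset.sum_comm]
    refine Finset.sum_congr rfl fun i _ => ?_
    rw [← Finset.sum_filter]
    refine Finset.sum_congr ?_ fun _ _ => rfl
    ext y
    simp only [Finset.mem_filter, shadow, Finset.mem_biUnion, Finset.mem_univ, true_and]
    exact ⟨fun h => ⟨⟨i, h⟩, h⟩, fun h => h.2⟩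
  have h2 : A.card = ∑ y ∈ shadow b A, if y ∈ A then 1 else 0 := by
    rw [← Finset.sum_filter, Finset.filter_mem_eq_inter, Finset.inter_eq_right.2 hsub,
      Finset.card_eq_sum_ones]
  rw [h1, h2, Finset.card_filter, ← Finset.sum_add_distrib]
  refine Finset.sum_le_sum fun y hy => ?_
  by_cases hyA : y ∈ A
  · have h3 : zeros b y ⊆ Finset.univ.filter fun i => y ∈ flat b i A := fun i hi => by
      simp [flat_eq_self hyA hi]
    have h4 := Finset.card_le_card h3
    obtain ⟨i, hi⟩ := hA y hyA
    have h5 : 0 < (zeros b y).card := Finset.card_pos.2 ⟨i, by simp [zeros, hi]⟩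
    split_ifs <;> omega
  · obtain ⟨i, _, hi⟩ := Finset.mem_biUnion.1 hy
    have h5 : 0 < (Finset.univ.filter fun i => y ∈ flat b i A).card :=
      Finset.card_pos.2 ⟨i, by simp [hi]⟩
    split_ifs <;> omega

/-- A point of `A` either has exactly one base coordinate or is a shadow point with at least two. -/
theorem card_le_sum_add {b : ℤ} {A : Finset (ι → ℤ)} (hA : ∀ x ∈ A, ∃ i, x i = b) :
    A.card ≤ ∑ i, (A.filter fun x => zeros b x = {i}).card
      + ((shadow b A).filter fun y => 2 ≤ (zeros b y).card).card := by
  have hsub : A ⊆ (Finset.univ.biUnion fun i => A.filter fun x => zeros b x = {i}) ∪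
      ((shadow b A).filter fun y => 2 ≤ (zeros b y).card) := fun y hy => by
    obtain ⟨i, hi⟩ := hA y hy
    have hi' : i ∈ zeros b y := by simp [zeros, hi]
    have h5 : 0 < (zeros b y).card := Finset.card_pos.2 ⟨i, hi'⟩
    by_cases h2 : 2 ≤ (zeros b y).card
    · exact Finset.mem_union_right _ (Finset.mem_filter.2
        ⟨Finset.mem_biUnion.2 ⟨i, Finset.mem_univ _, flat_eq_self hy hi'⟩, h2⟩)
    · obtain ⟨k, hk⟩ := Finset.card_eq_one.1 (show (zeros b y).card = 1 by omega)
      exact Finset.mem_union_left _ (by simp [hy, hk])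
  refine (Finset.card_le_card hsub).trans ((Finset.card_union_le _ _).trans ?_)
  gcongr
  exact Finset.card_biUnion_le

/-- Points of the shadow of `A` whose base coordinates are exactly `i` and `j`. -/
def edgeSet (b : ℤ) (A : Finset (ι → ℤ)) (i j : ι) : Finset (ι → ℤ) :=
  (shadow b A).filter fun y => zeros b y = {i, j}

/-- The sets `edgeSet b A i j` for distinct unordered pairs `{i, j}` are disjoint; each is counted
twice on the left. -/
theorem sum_edgeSet_le (b : ℤ) (A : Finset (ι → ℤ)) :
    ∑ i, ∑ j ∈ Finset.univ.erase i, (edgeSet b A i j).card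
      ≤ 2 * ((shadow b A).filter fun y => 2 ≤ (zeros b y).card).card := by
  have h1 : ∑ i, ∑ j ∈ Finset.univ.erase i, (edgeSet b A i j).card
      = ∑ y ∈ shadow b A, ∑ i : ι, ∑ j ∈ Finset.univ.erase i,
          if zeros b y = {i, j} then 1 else 0 := by
    simp_rw [edgeSet, Finset.card_filter]
    exact (Finset.sum_congr rfl fun i _ => Finset.sum_comm).trans Finset.sum_comm
  rw [h1, Finset.card_filter, Finset.mul_sum]
  refine Finset.sum_le_sum fun y _ => ?_
  by_cases h2 : (zeros b y).card = 2
  · have h3 : ∀ i : ι, (∑ j ∈ Finset.univ.erase i, if zeros b y = {i, j} then 1 else 0)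
        ≤ if i ∈ zeros b y then 1 else 0 := by
      intro i
      rw [← Finset.card_filter]
      split_ifs with hi
      · rw [← show ((zeros b y).erase i).card = 1 by rw [Finset.card_erase_of_mem hi, h2]]
        refine Finset.card_le_card fun j hj => ?_
        obtain ⟨hj1, hj2⟩ := Finset.mem_filter.1 hj
        exact Finset.mem_erase.2 ⟨Finset.ne_of_mem_erase hj1, by simp [hj2]⟩
      · rw [Nat.le_zero, Finset.card_eq_zero, Finset.filter_eq_empty_iff]
        intro j _ hj
        exact hi (by simp [hj])
    refine (Finset.sum_le_sum fun i _ => h3 i).trans ?_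
    rw [← Finset.card_filter]
    simp [h2]
  · rw [Finset.sum_eq_zero]
    · exact Nat.zero_le _
    intro i _
    refine Finset.sum_eq_zero fun j hj => if_neg fun h => h2 ?_
    rw [h, Finset.card_pair (Finset.ne_of_mem_erase hj).symm]

theorem flat_subset_edgeSet {b : ℤ} {A : Finset (ι → ℤ)} {i j : ι} (hij : j ≠ i) :
    flat b j (A.filter fun x => zeros b x = {i}) ⊆ edgeSet b A i j := by
  intro y hy
  obtain ⟨x, hx, rfl⟩ := Finset.mem_image.1 hy
  obtain ⟨hxA, hxi⟩ := Finset.mem_filter.1 hx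
  refine Finset.mem_filter.2 ⟨Finset.mem_biUnion.2 ⟨j, Finset.mem_univ _,
    Finset.mem_image_of_mem _ hxA⟩, ?_⟩
  ext k
  have hk : x k = b ↔ k = i := by
    have := Finset.ext_iff.1 hxi k
    simpa [zeros] using this
  by_cases hkj : k = j
  · subst hkj; simp [zeros]
  · simp [zeros, hkj, hk]

/-! ### The Loomis–Whitney inequality -/

/-- Hölder's inequality for a product of `|s|` functions: if
`v t ^ |s| ≤ C * ∏ j, u j t` for every `t`, then the same holds for the sums over `t`, with `U j` any
positive bounds on the sums of the `u j`. Proved by the inequality of arithmetic and geometric means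
applied to the normalised values `u j t / U j`. -/
theorem holder_pow {α β : Type*} (T : Finset α) (s : Finset β) (hs : s.Nonempty)
    (v : α → ℝ) (u : β → α → ℝ) (U : β → ℝ) {C : ℝ} (hC : 0 ≤ C) (hv : ∀ t ∈ T, 0 ≤ v t)
    (hu : ∀ j ∈ s, ∀ t ∈ T, 0 ≤ u j t) (hU : ∀ j ∈ s, 0 < U j)
    (huU : ∀ j ∈ s, ∑ t ∈ T, u j t ≤ U j)
    (h : ∀ t ∈ T, v t ^ s.card ≤ C * ∏ j ∈ s, u j t) :
    (∑ t ∈ T, v t) ^ s.card ≤ C * ∏ j ∈ s, U j := by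
  have hk0 : s.card ≠ 0 := hs.card_pos.ne'
  have hk : (0 : ℝ) < s.card := by exact_mod_cast hs.card_pos
  have hPU : 0 < ∏ j ∈ s, U j := Finset.prod_pos hU
  obtain ⟨K, hK⟩ : ∃ K, K = (C * ∏ j ∈ s, U j) ^ ((1 : ℝ) / s.card) := ⟨_, rfl⟩
  have hK0 : 0 ≤ K := by rw [hK]; positivity
  have hKk : K ^ s.card = C * ∏ j ∈ s, U j := by
    rw [hK, one_div, Real.rpow_inv_natCast_pow (by positivity) hk0]
  have hvt : ∀ t ∈ T, v t ≤ K * ∑ j ∈ s, (1 / (s.card : ℝ)) * (u j t / U j) := by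
    intro t ht
    have hw : ∀ j ∈ s, 0 ≤ u j t / U j := fun j hj => div_nonneg (hu j hj t ht) (hU j hj).le
    have amgm := Real.geom_mean_le_arith_mean_weighted s (fun _ => 1 / (s.card : ℝ))
      (fun j => u j t / U j) (fun _ _ => by positivity) (by simp; field_simp) hw
    refine le_trans ?_ (mul_le_mul_of_nonneg_left amgm hK0)
    rw [Real.finsetProd_rpow _ _ hw]
    have hPw : 0 ≤ ∏ j ∈ s, u j t / U j := Finset.prod_nonneg hw
    refine le_of_pow_le_pow_left₀ hk0 (by positivity) ((h t ht).trans ?_)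
    rw [mul_pow, hKk, one_div, Real.rpow_inv_natCast_pow hPw hk0, Finset.prod_div_distrib]
    field_simp
    exact le_rfl
  rw [← hKk]
  refine pow_le_pow_left₀ (Finset.sum_nonneg hv) ?_ _
  refine (Finset.sum_le_sum hvt).trans ?_
  rw [← Finset.mul_sum, Finset.sum_comm]
  simp_rw [← Finset.mul_sum, ← Finset.sum_div]
  have h1 : ∑ j ∈ s, (∑ t ∈ T, u j t) / U j ≤ ∑ j ∈ s, (1 : ℝ) :=
    Finset.sum_le_sum fun j hj => (div_le_one (hU j hj)).2 (huU j hj)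
  simp only [Finset.sum_const, nsmul_eq_mul, mul_one] at h1
  have h2 : 1 / (s.card : ℝ) * ∑ j ∈ s, (∑ t ∈ T, u j t) / U j ≤ 1 := by
    rw [one_div, inv_mul_le_iff₀ hk]; linarith
  nlinarith

/-- The Loomis–Whitney inequality for a nonempty set varying only in the coordinates in `s`, by
induction on `s`: slice along the new coordinate, apply the inductive hypothesis to the slices, and
add up with Hölder's inequality. -/
theorem loomis_whitney (b : ℤ) {s : Finset ι} (hs : s.Nonempty) : ∀ {A : Finset (ι → ℤ)},
    A.Nonempty → (∀ x ∈ A, ∀ y ∈ A, ∀ i ∉ s, x i = y i) →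
    A.card ^ (s.card - 1) ≤ ∏ j ∈ s, (flat b j A).card := by
  have hne' : ∀ {A : Finset (ι → ℤ)} (j : ι), A.Nonempty → 0 < (flat b j A).card :=
    fun j hA => Finset.card_pos.2 (hA.image _)
  induction hs using Finset.Nonempty.cons_induction with
  | singleton l =>
    intro A hA _
    simpa using hne' l hA
  | cons l s hl hs ih =>
    intro A hA hc
    have hk : s.card ≠ 0 := hs.card_pos.ne'
    rw [Finset.card_cons, Nat.add_sub_cancel, Finset.prod_cons]
    set T := A.image fun x => x l with hT
    have hcard : A.card = ∑ t ∈ T, (A.filter fun x => x l = t).card :=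
      Finset.card_eq_sum_card_fiberwise (f := fun x : ι → ℤ => x l)
        (fun x hx => Finset.mem_image_of_mem _ hx)
    have hslice : ∀ t ∈ T, (A.filter fun x => x l = t).card ^ s.card
        ≤ (flat b l A).card * ∏ j ∈ s, (flat b j (A.filter fun x => x l = t)).card := by
      intro t ht
      obtain ⟨x, hx, rfl⟩ := Finset.mem_image.1 ht
      have h1 := ih (A := A.filter fun y => y l = x l) ⟨x, by simp [hx]⟩ (by
        intro y hy z hz i hi
        obtain ⟨hy, hyl⟩ := Finset.mem_filter.1 hy
        obtain ⟨hz, hzl⟩ := Finset.mem_filter.1 hz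
        by_cases hil : i = l
        · subst hil; rw [hyl, hzl]
        · exact hc y hy z hz i (by simp [hil, hi]))
      have h2 : (A.filter fun y => y l = x l).card ≤ (flat b l A).card := by
        refine Finset.card_le_card_of_injOn (fun y => Function.update y l b)
          (fun y hy => Finset.mem_image_of_mem _ (Finset.mem_filter.1 hy).1) ?_
        intro y hy z hz hyz
        have hyl := (Finset.mem_filter.1 hy).2
        have hzl := (Finset.mem_filter.1 hz).2
        funext i
        by_cases hil : i = l
        · subst hil; rw [hyl, hzl]
        · have := congrFun hyz i
          simpa [hil] using this
      calc _ = (A.filter fun y => y l = x l).card * (A.filter fun y => y l = x l).card ^ (s.card - 1) := by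
            rw [← pow_succ', Nat.sub_add_cancel hs.card_pos]
        _ ≤ _ := Nat.mul_le_mul h2 h1
    have hsum : ∀ j ∈ s, ∑ t ∈ T, (flat b j (A.filter fun x => x l = t)).card
        ≤ (flat b j A).card := by
      intro j hj
      have hlj : l ≠ j := fun h => hl (h ▸ hj)
      rw [Finset.card_eq_sum_card_fiberwise (s := flat b j A) (t := T)
        (f := fun x : ι → ℤ => x l)]
      · refine Finset.sum_le_sum fun t _ => Finset.card_le_card fun y hy => ?_
        obtain ⟨x, hx, rfl⟩ := Finset.mem_image.1 hy
        obtain ⟨hx, hxt⟩ := Finset.mem_filter.1 hx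
        exact Finset.mem_filter.2 ⟨Finset.mem_image_of_mem _ hx, by simp [hlj, hxt]⟩
      · intro y hy
        obtain ⟨x, hx, rfl⟩ := Finset.mem_image.1 hy
        exact Finset.mem_image.2 ⟨x, hx, by simp [hlj]⟩
    have := holder_pow T s hs (fun t => ((A.filter fun x => x l = t).card : ℝ))
      (fun j t => ((flat b j (A.filter fun x => x l = t)).card : ℝ))
      (fun j => ((flat b j A).card : ℝ)) (C := ((flat b l A).card : ℝ)) (by positivity)
      (fun _ _ => by positivity) (fun _ _ _ _ => by positivity)
      (fun j _ => by exact_mod_cast hne' j hA)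
      (fun j hj => by exact_mod_cast hsum j hj) (fun t ht => by exact_mod_cast hslice t ht)
    rw [hcard]
    exact_mod_cast this

end Combinatorics

/-! ### The lower bound -/

/-- The gap of a weak antichain is nonnegative, and when it is smaller than `|A|` it is at least
`n.choose 2 * ((|A| - gap A) / n) ^ (1 - 1 / (n - 1))`. -/
theorem lower_bound {n : ℕ} (hn : 2 ≤ n) {A : Finset (Fin n → ℤ)} (hA : IsWeakAntichain A) :
    (0 : ℝ) ≤ gap A ∧ ((gap A : ℝ) < A.card →
      (n : ℝ) * (n - 1) / 2 * (((A.card : ℝ) - gap A) / n) ^ ((1 : ℝ) - 1 / ((n : ℝ) - 1))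
        ≤ gap A) := by
  have hn2 : (2 : ℝ) ≤ n := by exact_mod_cast hn
  have hn0 : (0 : ℝ) < n := by linarith
  have hn1 : (0 : ℝ) < (n : ℝ) - 1 := by linarith
  have hθ : (0 : ℝ) ≤ 1 - 1 / ((n : ℝ) - 1) := by
    rw [sub_nonneg, div_le_one hn1]; linarith
  -- a base value that is not a coordinate of any point of `A`
  obtain ⟨b, hb⟩ := Infinite.exists_notMem_finset
    (A.biUnion fun x => Finset.univ.image x)
  obtain ⟨A', hcard, hflat, hA'⟩ := exists_compressed hA (b := b) (fun x hx i h => hb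
    (Finset.mem_biUnion.2 ⟨x, hx, Finset.mem_image.2 ⟨i, Finset.mem_univ _, h⟩⟩))
  have h1 := card_add_card_le hA'
  have h2 := card_le_sum_add hA'
  have h3 := sum_edgeSet_le b A'
  set d := ((shadow b A').filter fun y => 2 ≤ (zeros b y).card).card with hd
  have hgap : (d : ℝ) ≤ gap A := by
    have : (d : ℤ) ≤ gap A := by
      have h4 : ∑ i, (flat b i A').card ≤ ∑ i, (flat b i A).card :=
        Finset.sum_le_sum fun i _ => hflat i
      rw [gap]
      simp_rw [card_proj b]
      rw [← Nat.cast_sum]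
      omega
    exact_mod_cast this
  refine ⟨le_trans (by positivity) hgap, fun hlt => ?_⟩
  -- `P i` counts the points whose only base coordinate is `i`
  obtain ⟨P, hP⟩ : ∃ P : Fin n → ℝ,
    P = fun i => ((A'.filter fun x => zeros b x = {i}).card : ℝ) := ⟨_, rfl⟩
  have h2' : (A.card : ℝ) ≤ ∑ i, P i + d := by
    rw [hP, ← hcard]; beta_reduce; exact_mod_cast h2
  have hS : 0 < ∑ i, P i := by linarith
  have h3' : ∑ i, ∑ j ∈ Finset.univ.erase i, ((edgeSet b A' i j).card : ℝ) ≤ 2 * d := by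
    exact_mod_cast h3
  have key := star_ineq hn (fun i j => ((edgeSet b A' i j).card : ℝ)) P
    (fun _ _ => by positivity) (fun i j => by simp only [edgeSet, Finset.pair_comm])
    (fun i => by rw [hP]; positivity) (fun i hi => ?_) hS
  · have h5 : (((A.card : ℝ) - gap A) / n) ^ ((1 : ℝ) - 1 / ((n : ℝ) - 1))
        ≤ ((∑ i, P i) / n) ^ ((1 : ℝ) - 1 / ((n : ℝ) - 1)) := by
      apply Real.rpow_le_rpow _ _ hθ
      · exact div_nonneg (by linarith) hn0.le
      · gcongr; linarith
    have h6 := mul_le_mul_of_nonneg_left h5 (show 0 ≤ (n : ℝ) * (n - 1) / 2 by positivity)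
    linarith
  · have hne : (A'.filter fun x => zeros b x = {i}).Nonempty := by
      rw [hP] at hi
      beta_reduce at hi
      exact Finset.card_pos.1 (by exact_mod_cast hi)
    have hs : (Finset.univ.erase i).card = n - 1 := by
      rw [Finset.card_erase_of_mem (Finset.mem_univ _), Finset.card_univ, Fintype.card_fin]
    have lw := loomis_whitney b (s := Finset.univ.erase i)
      (Finset.card_pos.1 (by omega)) hne (by
        intro x hx y hy j hj
        have hji : j = i := by simpa using hj
        subst hji
        have hz : ∀ z ∈ A'.filter fun x => zeros b x = {j}, z j = b := fun z hz => by
          have := (Finset.mem_filter.1 hz).2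
          have hj : j ∈ zeros b z := by simp [this]
          exact (Finset.mem_filter.1 hj).2
        rw [hz x hx, hz y hy])
    rw [hs, show n - 1 - 1 = n - 2 by omega] at lw
    have lw2 := lw.trans (Finset.prod_le_prod' fun j hj =>
      Finset.card_le_card (flat_subset_edgeSet (b := b) (A := A') (Finset.ne_of_mem_erase hj)))
    rw [hP]
    beta_reduce
    exact_mod_cast lw2

/-! ### The upper bound -/

/-- A finite set of nonnegative points that is closed under zeroing coordinates has subsets of
every smaller size with the same property: repeatedly remove a point of maximal coordinate sum. -/
theorem exists_closed_subset {n : ℕ} {B : Finset (Fin n → ℤ)} (h0 : ∀ x ∈ B, ∀ i, 0 ≤ x i)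
    (hcl : ∀ x ∈ B, ∀ i, Function.update x i 0 ∈ B) {k : ℕ} (hk : k ≤ B.card) :
    ∃ A ⊆ B, A.card = k ∧ ∀ x ∈ A, ∀ i, Function.update x i 0 ∈ A := by
  induction hd : B.card - k generalizing B with
  | zero => exact ⟨B, subset_rfl, by omega, hcl⟩
  | succ d ih =>
    obtain ⟨x, hx, hmax⟩ := Finset.exists_max_image B (fun x => ∑ i, x i)
      (Finset.card_pos.1 (by omega))
    have hc := Finset.card_erase_of_mem hx
    obtain ⟨A, hAB, hA⟩ := ih (B := B.erase x) (fun y hy => h0 y (Finset.mem_of_mem_erase hy))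
      (fun y hy i => by
        obtain ⟨hyx, hy⟩ := Finset.mem_erase.1 hy
        refine Finset.mem_erase.2 ⟨fun h => hyx ?_, hcl y hy i⟩
        -- `x` maximises the coordinate sum, so zeroing a coordinate of `y` cannot give `x`
        -- unless that coordinate already vanishes
        have h1 := hmax y hy
        have h2 : ∑ j, x j = ∑ j, y j - y i := by
          rw [← h, Finset.sum_update_of_mem (Finset.mem_univ i),
            ← Finset.add_sum_erase _ y (Finset.mem_univ i), Finset.sdiff_singleton_eq_erase]
          ring
        have h3 : y i = 0 := le_antisymm (by linarith) (h0 y hy i)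
        rw [← h, ← h3, Function.update_eq_self]) (by omega) (by omega)
    exact ⟨A, hAB.trans (Finset.erase_subset _ _), hA⟩

theorem mem_ANbox {n N : ℕ} {x : Fin n → ℤ} :
    x ∈ ANbox n N ↔ (∀ i, 0 ≤ x i ∧ x i < N) ∧ ∃ i, x i = 0 := by
  simp only [ANbox, Finset.mem_filter, Fintype.mem_piFinset, Finset.mem_image, Finset.mem_range]
  refine and_congr_left fun _ => forall_congr' fun i => ⟨?_, fun h => ⟨(x i).toNat, by omega⟩⟩
  rintro ⟨k, hk, h⟩
  omega

/-- The points of the box without a zero coordinate form a cube of side `N - 1`. -/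
theorem card_ANbox {n N : ℕ} : (ANbox n N).card + (N - 1) ^ n = N ^ n := by
  have himg : ((Finset.range N).image fun k : ℕ => (k : ℤ)).card = N := by
    rw [Finset.card_image_of_injective _ Nat.cast_injective, Finset.card_range]
  have h1 : (Fintype.piFinset fun _ : Fin n =>
      (Finset.range N).image fun k : ℕ => (k : ℤ)).card = N ^ n := by
    rw [Fintype.card_piFinset]; simp [himg]
  have h3 := Finset.card_filter_add_card_filter_not
    (s := Fintype.piFinset fun _ : Fin n => (Finset.range N).image fun k : ℕ => (k : ℤ))
    (fun x : Fin n → ℤ => ∃ i, x i = 0)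
  rw [← h1, ANbox, ← h3]
  congr 1
  have h2 : ((Fintype.piFinset fun _ : Fin n =>
      (Finset.range N).image fun k : ℕ => (k : ℤ)).filter fun x => ¬ ∃ i, x i = 0)
      = Fintype.piFinset fun _ : Fin n =>
        ((Finset.range N).image fun k : ℕ => (k : ℤ)).erase 0 := by
    ext x
    simp only [Finset.mem_filter, Fintype.mem_piFinset, Finset.mem_erase, not_exists]
    exact ⟨fun h i => ⟨h.2 i, h.1 i⟩, fun h => ⟨fun i => (h i).2, fun i => (h i).1⟩⟩
  rw [h2, Fintype.card_piFinset]
  simp only [Finset.prod_const, Finset.card_univ, Fintype.card_fin]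
  congr 1
  rcases Nat.eq_zero_or_pos N with rfl | hN
  · simp
  · rw [Finset.card_erase_of_mem, himg]
    exact Finset.mem_image.2 ⟨0, by simp [hN], rfl⟩

theorem card_ANbox_face {n N : ℕ} (i : Fin n) :
    ((ANbox n N).filter fun x => x i = 0).card ≤ N ^ (n - 1) := by
  have hsub : ((ANbox n N).filter fun x => x i = 0) ⊆ Fintype.piFinset fun j : Fin n =>
      if j = i then {0} else (Finset.range N).image fun k : ℕ => (k : ℤ) := by
    intro x hx
    obtain ⟨hx, hxi⟩ := Finset.mem_filter.1 hx
    refine Fintype.mem_piFinset.2 fun j => ?_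
    split_ifs with hj
    · subst hj; simp [hxi]
    · exact Fintype.mem_piFinset.1 (Finset.mem_filter.1 hx).1 j
  refine (Finset.card_le_card hsub).trans ?_
  rw [Fintype.card_piFinset, ← Finset.mul_prod_erase _ _ (Finset.mem_univ i)]
  rw [Finset.prod_congr rfl (g := fun _ => N)]
  · simp
  · intro j hj
    rw [if_neg (Finset.ne_of_mem_erase hj),
      Finset.card_image_of_injective _ Nat.cast_injective, Finset.card_range]

/-- Every size up to `|ANbox n N|` is attained by a weak antichain whose gap is at most
`n N ^ (n - 1) - |ANbox n N|`. For a set closed under zeroing coordinates, the projection along `i`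
is the part of the set where the `i`-th coordinate vanishes. -/
theorem exists_small_gap {n N m : ℕ} (hm : m ≤ (ANbox n N).card) :
    ∃ A : Finset (Fin n → ℤ), IsWeakAntichain A ∧ A.card = m ∧
      gap A ≤ n * (N : ℤ) ^ (n - 1) - (ANbox n N).card := by
  obtain ⟨A, hAB, hcard, hcl⟩ := exists_closed_subset (B := ANbox n N)
    (fun x hx i => ((mem_ANbox.1 hx).1 i).1) (fun x hx i => by
      obtain ⟨h1, h2⟩ := mem_ANbox.1 hx
      refine mem_ANbox.2 ⟨fun j => ?_, i, by simp⟩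
      by_cases hj : j = i
      · subst hj; have := h1 j; simp; omega
      · simp [hj, h1 j]) hm
  have hA : ∀ x ∈ A, (∀ i, 0 ≤ x i) ∧ ∃ i, x i = 0 := fun x hx =>
    ⟨fun i => ((mem_ANbox.1 (hAB hx)).1 i).1, (mem_ANbox.1 (hAB hx)).2⟩
  refine ⟨A, fun x hx y hy h => ?_, hcard, ?_⟩
  · obtain ⟨i, hi⟩ := (hA y hy).2
    have := (hA x hx).1 i
    have := h i
    omega
  -- `∑ i, |B ∩ {x i = 0}| - |B|` sums `#zeros - 1` over `B`; the summand is nonnegative on the box,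
  -- so the sum over `A` is at most the sum over the whole box
  have hcount : ∀ B : Finset (Fin n → ℤ), ∑ i, ((B.filter fun x => x i = 0).card : ℤ) - B.card
      = ∑ x ∈ B, (((zeros 0 x).card : ℤ) - 1) := by
    intro B
    rw [Finset.sum_sub_distrib]
    simp_rw [zeros, Finset.card_filter]
    push_cast
    rw [Finset.sum_comm]
    simp
  have h1 : gap A ≤ ∑ i, ((A.filter fun x => x i = 0).card : ℤ) - A.card := by
    rw [gap]
    simp_rw [card_proj 0]
    gcongr with i
    intro y hy
    obtain ⟨x, hx, rfl⟩ := Finset.mem_image.1 hy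
    exact Finset.mem_filter.2 ⟨hcl x hx i, by simp⟩
  have h2 : ∑ x ∈ A, (((zeros 0 x).card : ℤ) - 1) ≤ ∑ x ∈ ANbox n N, (((zeros 0 x).card : ℤ) - 1) := by
    refine Finset.sum_le_sum_of_subset_of_nonneg hAB fun x hx _ => ?_
    obtain ⟨i, hi⟩ := (mem_ANbox.1 hx).2
    have : 0 < (zeros 0 x).card := Finset.card_pos.2 ⟨i, by simp [zeros, hi]⟩
    omega
  rw [hcount] at h1
  rw [← hcount (ANbox n N)] at h2
  have h3 : ∑ i : Fin n, (((ANbox n N).filter fun x => x i = 0).card : ℤ)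
      ≤ ∑ i : Fin n, (N : ℤ) ^ (n - 1) :=
    Finset.sum_le_sum fun i _ => by exact_mod_cast card_ANbox_face i
  simp only [Finset.sum_const, Finset.card_univ, Fintype.card_fin, nsmul_eq_mul] at h3
  linarith

theorem pow_succ_sub_ge {x : ℝ} (hx : 0 ≤ x) (k : ℕ) :
    x ^ (k + 1) + (k + 1) * x ^ k ≤ (x + 1) ^ (k + 1) := by
  induction k with
  | zero => simp
  | succ k ih =>
    have := mul_le_mul_of_nonneg_right ih (show 0 ≤ x + 1 by linarith)
    have h2 : 0 ≤ ((k : ℝ) + 1) * x ^ k := by positivity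
    push_cast
    calc _ ≤ (x ^ (k + 1) + (k + 1) * x ^ k) * (x + 1) := by ring_nf at h2 ⊢; linarith
      _ ≤ _ := by rw [pow_succ (x + 1)]; exact this

/-- With `n = k + 2`, the number `y ^ n - (y - 1) ^ n` is the size of `ANbox n y`, a union of `n`
faces of size `y ^ (n - 1)` that meet pairwise in `y ^ (n - 2)` points. This is the second Bonferroni
inequality for that union, extended to real `y ≥ 1`. -/
theorem pow_bonferroni {y : ℝ} (hy : 1 ≤ y) (k : ℕ) :
    (k + 2) * y ^ (k + 1) - y ^ (k + 2) + (y - 1) ^ (k + 2)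
      ≤ ((k : ℝ) + 2) * (k + 1) / 2 * y ^ k := by
  induction k with
  | zero => norm_num; nlinarith
  | succ k ih =>
    have := mul_le_mul_of_nonneg_right ih (show 0 ≤ y - 1 by linarith)
    have h2 : 0 ≤ ((k : ℝ) + 2) * (k + 1) / 2 * y ^ k := by positivity
    push_cast
    ring_nf at this h2 ⊢
    linarith

/-- If `m ≤ n x ^ (n - 1)`, then the box of side `x + 1` contains a weak antichain of size `m` with
gap at most `n.choose 2 * (x + 1) ^ (n - 2)`. -/
theorem upper_bound {n : ℕ} (hn : 2 ≤ n) (m : ℕ) {x : ℕ} (hm : m ≤ n * x ^ (n - 1)) :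
    ∃ A : Finset (Fin n → ℤ), IsWeakAntichain A ∧ A.card = m ∧
      (gap A : ℝ) ≤ (n : ℝ) * (n - 1) / 2 * ((x : ℝ) + 1) ^ (n - 2) := by
  obtain ⟨k, rfl⟩ : ∃ k, n = k + 2 := ⟨n - 2, by omega⟩
  have hc : ((ANbox (k + 2) (x + 1)).card : ℝ) + (x : ℝ) ^ (k + 2) = ((x : ℝ) + 1) ^ (k + 2) := by
    exact_mod_cast card_ANbox (n := k + 2) (N := x + 1)
  have h1 := pow_succ_sub_ge (Nat.cast_nonneg (α := ℝ) x) (k + 1)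
  have h2 := pow_bonferroni (y := (x : ℝ) + 1) (by simp) k
  obtain ⟨A, hA, hcard, hgap⟩ := exists_small_gap (n := k + 2) (N := x + 1) (m := m) (by
    have : (m : ℝ) ≤ (ANbox (k + 2) (x + 1)).card := by
      have hm' : (m : ℝ) ≤ ((k : ℝ) + 2) * (x : ℝ) ^ (k + 1) := by exact_mod_cast hm
      push_cast at h1
      have e : (k : ℝ) + 1 + 1 = k + 2 := by ring
      rw [e, show k + 1 + 1 = k + 2 by ring] at h1
      linarith
    exact_mod_cast this)
  refine ⟨A, hA, hcard, ?_⟩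
  have hgap' : (gap A : ℝ) ≤ ((k : ℝ) + 2) * ((x : ℝ) + 1) ^ (k + 1)
      - (ANbox (k + 2) (x + 1)).card := by exact_mod_cast hgap
  have e : (x : ℝ) + 1 - 1 = x := by ring
  rw [e] at h2
  push_cast
  rw [show (k : ℝ) + 2 - 1 = k + 1 by ring]
  linarith

/-! ### The limit -/
/-- For fixed `n ≥ 2`, `g(n,m) ∼ c_n m^{1-1/(n-1)}` as `m → ∞`, where
`c_n = (1/2)(n-1) n^{1/(n-1)}`; i.e. `g(n,m) / (c_n m^{1-1/(n-1)}) → 1`. -/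
theorem gMin_asymptotic (n : ℕ) (hn : 2 ≤ n) :
    Filter.Tendsto
      (fun m : ℕ => gMin n m /
        ((1 / 2 : ℝ) * ((n : ℝ) - 1) * (n : ℝ) ^ ((1 : ℝ) / ((n : ℝ) - 1)) *
          (m : ℝ) ^ ((1 : ℝ) - 1 / ((n : ℝ) - 1))))
      Filter.atTop (nhds 1) := by
  have hn2 : (2 : ℝ) ≤ n := by exact_mod_cast hn
  have hn0 : (0 : ℝ) < n := by linarith
  have hn1 : (0 : ℝ) < (n : ℝ) - 1 := by linarith
  obtain ⟨θ, hθ⟩ : ∃ θ, θ = (1 : ℝ) - 1 / ((n : ℝ) - 1) := ⟨_, rfl⟩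
  have hθ0 : 0 ≤ θ := by
    rw [hθ, sub_nonneg, div_le_one hn1]; linarith
  obtain ⟨c, hc⟩ : ∃ c, c = (1 / 2 : ℝ) * ((n : ℝ) - 1) * (n : ℝ) ^ ((1 : ℝ) / ((n : ℝ) - 1)) :=
    ⟨_, rfl⟩
  have hc0 : 0 < c := by rw [hc]; positivity
  rw [← hθ, ← hc]
  -- the leading terms of the lower and the upper bound agree and have the stated constant
  have hconst : ∀ t : ℝ, 0 ≤ t → (n : ℝ) * (n - 1) / 2 * (t / n) ^ θ = c * t ^ θ := by
    intro t ht
    have h1 : (n : ℝ) ^ ((1 : ℝ) / ((n : ℝ) - 1)) = n / (n : ℝ) ^ θ := by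
      rw [show (1 : ℝ) / ((n : ℝ) - 1) = 1 - θ by rw [hθ]; ring, Real.rpow_sub hn0, Real.rpow_one]
    rw [hc, h1, Real.div_rpow ht hn0.le]
    ring
  -- `u m` is the side length for which `n` faces of the box have `m` points in total
  obtain ⟨u, hu⟩ : ∃ u : ℕ → ℝ, u = fun m : ℕ => ((m : ℝ) / n) ^ ((1 : ℝ) / ((n : ℝ) - 1)) :=
    ⟨_, rfl⟩
  have hu_top : Filter.Tendsto u Filter.atTop Filter.atTop := by
    rw [hu]
    exact (tendsto_rpow_atTop (by positivity)).comp
      (tendsto_natCast_atTop_atTop.atTop_div_const hn0)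
  have hu0 : ∀ m, 0 ≤ u m := fun m => by rw [hu]; positivity
  have hcast1 : ((n - 1 : ℕ) : ℝ) = (n : ℝ) - 1 := by
    rw [Nat.cast_sub (by omega)]; simp
  have hcast2 : ((n - 2 : ℕ) : ℝ) = (n : ℝ) - 2 := by
    rw [Nat.cast_sub (by omega)]; simp
  have hu1 : ∀ m, u m ^ (n - 1) = (m : ℝ) / n := fun m => by
    rw [hu]; simp only
    rw [← Real.rpow_natCast, ← Real.rpow_mul (by positivity), hcast1,
      one_div_mul_cancel hn1.ne', Real.rpow_one]
  have hu2 : ∀ m, u m ^ (n - 2) = ((m : ℝ) / n) ^ θ := fun m => by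
    rw [hu]; simp only
    rw [← Real.rpow_natCast, ← Real.rpow_mul (by positivity), hcast2]
    congr 1
    rw [hθ]; field_simp; ring
  have hex : ∀ m : ℕ, ∃ A : Finset (Fin n → ℤ), IsWeakAntichain A ∧ A.card = m ∧
      (gap A : ℝ) ≤ (n : ℝ) * (n - 1) / 2 * ((⌈u m⌉₊ : ℝ) + 1) ^ (n - 2) := by
    intro m
    refine upper_bound hn m ?_
    have h1 : u m ^ (n - 1) ≤ (⌈u m⌉₊ : ℝ) ^ (n - 1) := by
      have := hu0 m
      gcongr
      exact Nat.le_ceil _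
    rw [hu1, div_le_iff₀ hn0] at h1
    have : (m : ℝ) ≤ n * (⌈u m⌉₊ : ℝ) ^ (n - 1) := by linarith
    exact_mod_cast this
  have hbdd : ∀ m : ℕ, BddBelow {r : ℝ | ∃ A : Finset (Fin n → ℤ),
      IsWeakAntichain A ∧ A.card = m ∧ (gap A : ℝ) = r} := by
    intro m
    refine ⟨0, ?_⟩
    rintro r ⟨A, hA, -, rfl⟩
    exact (lower_bound hn hA).1
  have hq : Filter.Tendsto (fun m : ℕ => c * (m : ℝ) ^ (θ - 1)) Filter.atTop (nhds 0) := by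
    have h1 := (tendsto_rpow_neg_atTop (y := 1 / ((n : ℝ) - 1)) (by positivity)).comp
      (tendsto_natCast_atTop_atTop (R := ℝ))
    have h2 := h1.const_mul c
    rw [mul_zero] at h2
    refine h2.congr fun m => ?_
    rw [Function.comp_apply, hθ]
    congr 2
    ring
  have hlow : Filter.Tendsto (fun m : ℕ => (1 - c * (m : ℝ) ^ (θ - 1)) ^ θ) Filter.atTop
      (nhds 1) := by
    have := (hq.const_sub 1).rpow_const (p := θ) (Or.inr hθ0)
    simpa using this
  have hup : Filter.Tendsto (fun m : ℕ => (1 + 2 / u m) ^ (n - 2)) Filter.atTop (nhds 1) := by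
    have h1 : Filter.Tendsto (fun m : ℕ => 2 / u m) Filter.atTop (nhds 0) :=
      hu_top.const_div_atTop 2
    have := (h1.const_add 1).pow (n - 2)
    simpa using this
  refine tendsto_of_tendsto_of_tendsto_of_le_of_le' hlow hup ?_ ?_
  · filter_upwards [Filter.eventually_gt_atTop 0, hq.eventually_lt_const one_pos] with m hm hlt
    have hm0 : (0 : ℝ) < m := by exact_mod_cast hm
    have hmθ : 0 < (m : ℝ) ^ θ := by positivity
    have hqm : c * (m : ℝ) ^ θ = c * (m : ℝ) ^ (θ - 1) * m := by
      rw [Real.rpow_sub_one hm0.ne']; field_simp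
    have hqpos : 0 < c * (m : ℝ) ^ (θ - 1) := by positivity
    rw [le_div_iff₀ (by positivity)]
    refine le_csInf ?_ ?_
    · obtain ⟨A, hA, hcard, -⟩ := hex m
      exact ⟨_, A, hA, hcard, rfl⟩
    rintro r ⟨A, hA, hcard, rfl⟩
    have hle1 : (1 - c * (m : ℝ) ^ (θ - 1)) ^ θ ≤ 1 :=
      Real.rpow_le_one (by linarith) (by linarith) hθ0
    -- A gap of at least `c m ^ θ` is large enough already; a smaller one leaves
    -- `|A| - gap A ≥ (1 - c m ^ (θ - 1)) m`, to be inserted into the lower bound.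
    rcases le_or_gt (c * (m : ℝ) ^ θ) (gap A) with h | h
    · refine le_trans ?_ h
      exact mul_le_of_le_one_left (by positivity) hle1
    have hqlt : c * (m : ℝ) ^ θ < m := by
      rw [hqm]; nlinarith
    have h1 := (lower_bound hn hA).2 (by rw [hcard]; linarith)
    rw [← hθ, hcard, hconst _ (by linarith)] at h1
    refine le_trans ?_ h1
    have h2 : ((1 - c * (m : ℝ) ^ (θ - 1)) * m) ^ θ ≤ ((m : ℝ) - gap A) ^ θ := by
      apply Real.rpow_le_rpow _ _ hθ0
      · exact mul_nonneg (by linarith) hm0.le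
      · rw [sub_mul, ← hqm]; linarith
    rw [Real.mul_rpow (by linarith) hm0.le] at h2
    have := mul_le_mul_of_nonneg_left h2 hc0.le
    linarith
  · filter_upwards [hu_top.eventually_gt_atTop 0, Filter.eventually_gt_atTop 0] with m hum hm
    have hm0 : (0 : ℝ) < m := by exact_mod_cast hm
    have hmθ : 0 < (m : ℝ) ^ θ := by positivity
    rw [div_le_iff₀ (by positivity), ← hconst _ hm0.le, ← hu2]
    obtain ⟨A, hA, hcard, hgap⟩ := hex m
    refine (csInf_le (hbdd m) ⟨A, hA, hcard, rfl⟩).trans (hgap.trans ?_)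
    have h1 : ((⌈u m⌉₊ : ℝ) + 1) ≤ (1 + 2 / u m) * u m := by
      have := Nat.ceil_lt_add_one (hu0 m)
      have e : (1 + 2 / u m) * u m = u m + 2 := by field_simp
      rw [e]; linarith
    calc (n : ℝ) * (n - 1) / 2 * ((⌈u m⌉₊ : ℝ) + 1) ^ (n - 2)
        ≤ (n : ℝ) * (n - 1) / 2 * ((1 + 2 / u m) * u m) ^ (n - 2) := by gcongr
      _ = _ := by rw [mul_pow]; ring

end ProjWA
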